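/- Suppose there exist a diagonal positive definite P ∈ ℝ^{n×n}, a diagonal positive definite T ∈ ℝ^{m×m}, scalars μ, χ, α > 0, and a symmetric positive definite Γ ∈ ℝ^{n×n} such that: (C1) [[H_clᵀPΛH_cl − e^{−μ}PΛ, H_clᵀPΛB − KᵀT],[BᵀPΛH_cl − TK, BᵀPΛB − 2T]] is negative semidefinite; (C2) [[Γ, PN],[NᵀP, χ²I]] is positive semidefinite; (C3) P(αI − μΛ) + Γ is negative semidefinite. Then for every continuously differentiable X : [0,1] → ℝⁿ satisfying X(0) = H_cl X(1) + Bφ(K X(1)) and every continuous d : [0,1] → ℝ^q, one has ∫₀¹ e^{−μz}(−2 X′(z)ᵀ Λ P X(z) + 2 d(z)ᵀ Nᵀ P X(z)) dz ≤ −α ∫₀¹ e^{−μz} X(z)ᵀ P X(z) dz + χ² ∫₀¹ |d(z)|² dz. -/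

import Mathlib

open Matrix Set

/-- Componentwise saturation function with saturation levels `ubar`. -/
noncomputable def saturate {m : ℕ} (ubar : Fin m → ℝ) (u : Fin m → ℝ) : Fin m → ℝ :=
  fun i => min |u i| (ubar i) * Real.sign (u i)

/-- Dead-zone nonlinearity `φ(u) = σ(u) - u`. -/
noncomputable def deadzone {m : ℕ} (ubar : Fin m → ℝ) (u : Fin m → ℝ) : Fin m → ℝ :=
  saturate ubar u - u

/-- The Euclidean norm on `ℝ^q`. -/
noncomputable def enorm' {q : ℕ} (x : Fin q → ℝ) : ℝ := Real.sqrt (∑ i, (x i) ^ 2)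

/-!
Since `P Λ` is symmetric, the total derivative of `e^{-μz} X(z)ᵀ P Λ X(z)` is
`e^{-μz} (2 X'ᵀ P Λ X - μ Xᵀ P Λ X)`. Its integral is a pure boundary term, nonnegative by (C1)
and the sector condition `φᵀ T (φ + K X(1)) ≤ 0` of the dead zone. Adding it to the left-hand side
cancels the `X'` term and leaves an estimate between quadratic forms in `(X(z), d(z))` at each `z`,
which is (C2) combined with (C3); the weight `e^{-μz} ≤ 1` is then dropped from the `|d|²` term.
-/

section QuadraticForm

variable {ι κ ρ τ : Type*} [Fintype ι] [Fintype κ] [Fintype ρ] [Fintype τ]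

lemma dotProduct_mulVec_comm_of_isSymm {R : Type*} [CommSemiring R] {M : Matrix ι ι R}
    (hM : M.IsSymm) (x y : ι → R) : x ⬝ᵥ M *ᵥ y = y ⬝ᵥ M *ᵥ x := by
  simpa only [hM.eq] using dotProduct_transpose_mulVec M x y

lemma dotProduct_transpose_mul_mul_mulVec {R : Type*} [CommSemiring R]
    (C : Matrix ι κ R) (M : Matrix ι ρ R) (D : Matrix ρ τ R) (x : κ → R) (y : τ → R) :
    x ⬝ᵥ (Cᵀ * M * D) *ᵥ y = (C *ᵥ x) ⬝ᵥ M *ᵥ (D *ᵥ y) := by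
  rw [← mulVec_mulVec, ← mulVec_mulVec, dotProduct_mulVec, vecMul_transpose]

lemma quadForm_nonneg_of_posSemidef_fromBlocks {A : Matrix ι ι ℝ} {B : Matrix ι κ ℝ}
    {C : Matrix κ ι ℝ} {D : Matrix κ κ ℝ} (h : (fromBlocks A B C D).PosSemidef)
    (x : ι → ℝ) (y : κ → ℝ) :
    0 ≤ x ⬝ᵥ A *ᵥ x + 2 * (y ⬝ᵥ C *ᵥ x) + y ⬝ᵥ D *ᵥ y := by
  obtain ⟨-, hBC, -, -⟩ := isHermitian_fromBlocks_iff.1 h.isHermitian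
  have hcross : x ⬝ᵥ B *ᵥ y = y ⬝ᵥ C *ᵥ x := by
    rw [← hBC, conjTranspose_eq_transpose_of_trivial, dotProduct_transpose_mulVec]
  have hquad := h.dotProduct_mulVec_nonneg (Sum.elim x y)
  rw [star_trivial, fromBlocks_mulVec, sumElim_dotProduct_sumElim] at hquad
  simp only [Sum.elim_comp_inl, Sum.elim_comp_inr, dotProduct_add, hcross] at hquad
  linarith

lemma two_mul_dotProduct_mulVec_le_of_posSemidef_fromBlocks {A : Matrix ι ι ℝ}
    {B : Matrix ι κ ℝ} {C : Matrix κ ι ℝ} {D : Matrix κ κ ℝ}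
    (h : (fromBlocks A B C D).PosSemidef) (x : ι → ℝ) (y : κ → ℝ) :
    2 * (y ⬝ᵥ C *ᵥ x) ≤ x ⬝ᵥ A *ᵥ x + y ⬝ᵥ D *ᵥ y := by
  have hquad := quadForm_nonneg_of_posSemidef_fromBlocks h x (-y)
  simp only [mulVec_neg, neg_dotProduct, dotProduct_neg, neg_neg] at hquad
  linarith

/-- S-procedure with multiplier `T`: evaluated at `(x, w)`, the matrix inequality bounds the
left-hand side minus the right-hand side by twice the sector term `w ⬝ᵥ T *ᵥ (w + K *ᵥ x)`. -/
lemma boundary_quadForm_le {A M : Matrix ι ι ℝ} {B : Matrix ι κ ℝ} {K : Matrix κ ι ℝ}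
    {T : Matrix κ κ ℝ} {c : ℝ} (hM : M.IsSymm)
    (hC1 : (-(fromBlocks (Aᵀ * M * A - c • M) (Aᵀ * M * B - Kᵀ * T)
      (Bᵀ * M * A - T * K) (Bᵀ * M * B - 2 • T))).PosSemidef)
    {x : ι → ℝ} {w : κ → ℝ} (hw : w ⬝ᵥ T *ᵥ (w + K *ᵥ x) ≤ 0) :
    (A *ᵥ x + B *ᵥ w) ⬝ᵥ M *ᵥ (A *ᵥ x + B *ᵥ w) ≤ c * (x ⬝ᵥ M *ᵥ x) := by
  rw [fromBlocks_neg] at hC1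
  have hquad := quadForm_nonneg_of_posSemidef_fromBlocks hC1 x w
  have hcross := dotProduct_mulVec_comm_of_isSymm hM (A *ᵥ x) (B *ᵥ w)
  simp only [neg_mulVec, sub_mulVec, smul_mulVec, ← mulVec_mulVec _ T K,
    dotProduct_transpose_mul_mul_mulVec, dotProduct_neg, dotProduct_sub, dotProduct_smul,
    smul_eq_mul, two_smul, add_mulVec, dotProduct_add] at hquad
  simp only [mulVec_add, dotProduct_add, add_dotProduct] at hw ⊢
  linarith

lemma two_mul_disturbance_le [DecidableEq ι] [DecidableEq κ] {Λ P Γ : Matrix ι ι ℝ}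
    {N : Matrix ι κ ℝ} {μ χ α : ℝ}
    (hC2 : (fromBlocks Γ (P * N) (Nᵀ * P) (χ ^ 2 • (1 : Matrix κ κ ℝ))).PosSemidef)
    (hC3 : (-(P * (α • (1 : Matrix ι ι ℝ) - μ • Λ) + Γ)).PosSemidef) (x : ι → ℝ) (v : κ → ℝ) :
    2 * (v ⬝ᵥ (Nᵀ * P) *ᵥ x) ≤
      μ * (x ⬝ᵥ (P * Λ) *ᵥ x) - α * (x ⬝ᵥ P *ᵥ x) + χ ^ 2 * (v ⬝ᵥ v) := by
  have hyoung := two_mul_dotProduct_mulVec_le_of_posSemidef_fromBlocks hC2 x v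
  have hdecay := hC3.dotProduct_mulVec_nonneg x
  simp only [smul_mulVec, one_mulVec, dotProduct_smul, smul_eq_mul] at hyoung
  simp only [star_trivial, Matrix.mul_sub, Matrix.mul_smul, Matrix.mul_one, neg_mulVec, add_mulVec,
    sub_mulVec, smul_mulVec, dotProduct_neg, dotProduct_add, dotProduct_sub, dotProduct_smul,
    smul_eq_mul] at hdecay
  linarith

end QuadraticForm

section DeadZone

variable {m : ℕ} {ubar : Fin m → ℝ}

lemma deadzone_mul_saturate_nonpos {i : Fin m} (hubar : 0 ≤ ubar i) (u : Fin m → ℝ) :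
    deadzone ubar u i * saturate ubar u i ≤ 0 := by
  have hgap : 0 ≤ min |u i| (ubar i) * (|u i| - min |u i| (ubar i)) :=
    mul_nonneg (le_min (abs_nonneg _) hubar) (sub_nonneg.2 (min_le_left _ _))
  simp only [deadzone, saturate, Pi.sub_apply]
  rcases lt_trichotomy (u i) 0 with hu | hu | hu
  · rw [abs_of_neg hu] at hgap
    rw [Real.sign_of_neg hu, abs_of_neg hu]
    linarith
  · simp only [hu, Real.sign_zero, mul_zero, le_refl]
  · rw [abs_of_pos hu] at hgap
    rw [Real.sign_of_pos hu, abs_of_pos hu]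
    linarith

lemma deadzone_dotProduct_mulVec_nonpos {T : Matrix (Fin m) (Fin m) ℝ} (hT : T.IsDiag)
    (hT_nonneg : ∀ i, 0 ≤ T i i) (hubar : ∀ i, 0 ≤ ubar i) (u : Fin m → ℝ) :
    deadzone ubar u ⬝ᵥ T *ᵥ (deadzone ubar u + u) ≤ 0 := by
  have hsat : deadzone ubar u + u = saturate ubar u := sub_add_cancel _ _
  rw [hsat, ← hT.diagonal_diag]
  simp only [dotProduct, mulVec_diagonal, diag_apply]
  refine Finset.sum_nonpos fun i _ => ?_
  rw [mul_left_comm]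
  exact mul_nonpos_of_nonneg_of_nonpos (hT_nonneg i) (deadzone_mul_saturate_nonpos (hubar i) u)

end DeadZone

lemma enorm'_sq {q : ℕ} (x : Fin q → ℝ) : enorm' x ^ 2 = x ⬝ᵥ x := by
  rw [enorm', Real.sq_sqrt (Finset.sum_nonneg fun i _ => sq_nonneg (x i))]
  simp only [dotProduct, sq]

lemma commute_of_isDiag {ι R : Type*} [Fintype ι] [CommSemiring R] {A B : Matrix ι ι R}
    (hA : A.IsDiag) (hB : B.IsDiag) : Commute A B := by
  classical
  rw [← hA.diagonal_diag, ← hB.diagonal_diag]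
  exact commute_diagonal _ _

lemma isDiag_mul {ι R : Type*} [Fintype ι] [NonUnitalNonAssocSemiring R] {A B : Matrix ι ι R}
    (hA : A.IsDiag) (hB : B.IsDiag) : (A * B).IsDiag := by
  classical
  rw [← hA.diagonal_diag, ← hB.diagonal_diag, diagonal_mul_diagonal]
  exact isDiag_diagonal _

section Calculus

variable {ι κ : Type*} [Fintype ι]

lemma continuousOn_dotProduct_mulVec [Fintype κ] {S R : Type*} [TopologicalSpace S]
    [TopologicalSpace R] [NonUnitalNonAssocSemiring R] [ContinuousAdd R] [ContinuousMul R]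
    {s : Set S} {f : S → ι → R} {g : S → κ → R} (M : Matrix ι κ R) (hf : ContinuousOn f s)
    (hg : ContinuousOn g s) : ContinuousOn (fun z => f z ⬝ᵥ M *ᵥ g z) s := by
  have hbilin : Continuous fun p : (ι → R) × (κ → R) => p.1 ⬝ᵥ M *ᵥ p.2 := by fun_prop
  exact hbilin.comp_continuousOn (hf.prodMk hg)

variable {𝕜 : Type*} [NontriviallyNormedField 𝕜] {s : Set 𝕜} {z : 𝕜}

lemma hasDerivWithinAt_dotProduct {f g : 𝕜 → ι → 𝕜} {f' g' : ι → 𝕜}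
    (hf : HasDerivWithinAt f f' s z) (hg : HasDerivWithinAt g g' s z) :
    HasDerivWithinAt (fun t => f t ⬝ᵥ g t) (f' ⬝ᵥ g z + f z ⬝ᵥ g') s z := by
  simp only [dotProduct, ← Finset.sum_add_distrib]
  exact HasDerivWithinAt.fun_sum fun i _ =>
    (hasDerivWithinAt_pi.1 hf i).fun_mul (hasDerivWithinAt_pi.1 hg i)

lemma hasDerivWithinAt_mulVec (M : Matrix κ ι 𝕜) {f : 𝕜 → ι → 𝕜} {f' : ι → 𝕜}
    (hf : HasDerivWithinAt f f' s z) :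
    HasDerivWithinAt (fun t => M *ᵥ f t) (M *ᵥ f') s z :=
  hasDerivWithinAt_pi.2 fun i => by
    simpa only [mulVec, zero_dotProduct, zero_add] using
      hasDerivWithinAt_dotProduct (hasDerivWithinAt_const z s (M i)) hf

lemma hasDerivWithinAt_quadForm {M : Matrix ι ι 𝕜} (hM : M.IsSymm) {f : 𝕜 → ι → 𝕜}
    {f' : ι → 𝕜} (hf : HasDerivWithinAt f f' s z) :
    HasDerivWithinAt (fun t => f t ⬝ᵥ M *ᵥ f t) (2 * (f' ⬝ᵥ M *ᵥ f z)) s z := by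
  refine (hasDerivWithinAt_dotProduct hf (hasDerivWithinAt_mulVec M hf)).congr_deriv ?_
  rw [dotProduct_mulVec_comm_of_isSymm hM (f z), two_mul]

lemma hasDerivWithinAt_exp_mul_quadForm {M : Matrix ι ι ℝ} (hM : M.IsSymm) (μ : ℝ)
    {f : ℝ → ι → ℝ} {f' : ι → ℝ} {s : Set ℝ} {z : ℝ} (hf : HasDerivWithinAt f f' s z) :
    HasDerivWithinAt (fun t => Real.exp (-μ * t) * (f t ⬝ᵥ M *ᵥ f t))
      (Real.exp (-μ * z) * (2 * (f' ⬝ᵥ M *ᵥ f z) - μ * (f z ⬝ᵥ M *ᵥ f z))) s z := by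
  have hweight := ((hasDerivWithinAt_id z s).const_mul (-μ)).exp
  refine (hweight.fun_mul (hasDerivWithinAt_quadForm hM hf)).congr_deriv ?_
  simp only [id_eq]
  ring

lemma integral_exp_mul_deriv_quadForm {M : Matrix ι ι ℝ} (hM : M.IsSymm) (μ : ℝ)
    {f f' : ℝ → ι → ℝ} {a b : ℝ} (hab : a ≤ b)
    (hf : ∀ z ∈ Icc a b, HasDerivWithinAt f (f' z) (Icc a b) z)
    (hf' : ContinuousOn f' (Icc a b)) :
    ∫ z in a..b, Real.exp (-μ * z) * (2 * (f' z ⬝ᵥ M *ᵥ f z) - μ * (f z ⬝ᵥ M *ᵥ f z)) =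
      Real.exp (-μ * b) * (f b ⬝ᵥ M *ᵥ f b) - Real.exp (-μ * a) * (f a ⬝ᵥ M *ᵥ f a) := by
  have hderiv := fun z hz => hasDerivWithinAt_exp_mul_quadForm hM μ (hf z hz)
  have hcont : ContinuousOn f (Icc a b) := fun z hz => (hf z hz).continuousWithinAt
  have hf'Mf := continuousOn_dotProduct_mulVec M hf' hcont
  have hfMf := continuousOn_dotProduct_mulVec M hcont hcont
  refine intervalIntegral.integral_eq_sub_of_hasDerivAt_of_le hab
    (fun z hz => (hderiv z hz).continuousWithinAt)
    (fun z hz => (hderiv z (Ioo_subset_Icc_self hz)).hasDerivAt (Icc_mem_nhds hz.1 hz.2))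
    (ContinuousOn.intervalIntegrable_of_Icc hab ?_)
  fun_prop

end Calculus

section Dissipation

variable {ι κ ρ : Type*} [Fintype ι] [Fintype κ] [Fintype ρ]

lemma integral_exp_mul_deriv_quadForm_nonneg {A M : Matrix ι ι ℝ} {B : Matrix ι κ ℝ}
    {K : Matrix κ ι ℝ} {T : Matrix κ κ ℝ} {μ : ℝ} (hM : M.IsSymm)
    (hC1 : (-(fromBlocks (Aᵀ * M * A - Real.exp (-μ) • M) (Aᵀ * M * B - Kᵀ * T)
      (Bᵀ * M * A - T * K) (Bᵀ * M * B - 2 • T))).PosSemidef)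
    {X X' : ℝ → ι → ℝ} (hX : ∀ z ∈ Icc (0 : ℝ) 1, HasDerivWithinAt X (X' z) (Icc (0 : ℝ) 1) z)
    (hX' : ContinuousOn X' (Icc (0 : ℝ) 1)) {w : κ → ℝ}
    (hbc : X 0 = A *ᵥ X 1 + B *ᵥ w) (hw : w ⬝ᵥ T *ᵥ (w + K *ᵥ X 1) ≤ 0) :
    0 ≤ ∫ z in (0 : ℝ)..1,
      Real.exp (-μ * z) * (2 * (X' z ⬝ᵥ M *ᵥ X z) - μ * (X z ⬝ᵥ M *ᵥ X z)) := by
  rw [integral_exp_mul_deriv_quadForm hM μ zero_le_one hX hX', mul_one, mul_zero, Real.exp_zero,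
    one_mul, sub_nonneg, hbc]
  exact boundary_quadForm_le hM hC1 hw

variable [DecidableEq ι] [DecidableEq ρ]

lemma dissipation_integrand_le {Λ P Γ : Matrix ι ι ℝ} {N : Matrix ι ρ ℝ} {μ χ α : ℝ}
    (hΛP : Commute Λ P)
    (hC2 : (fromBlocks Γ (P * N) (Nᵀ * P) (χ ^ 2 • (1 : Matrix ρ ρ ℝ))).PosSemidef)
    (hC3 : (-(P * (α • (1 : Matrix ι ι ℝ) - μ • Λ) + Γ)).PosSemidef)
    {e : ℝ} (he : 0 ≤ e) (he_le : e ≤ 1) (x x' : ι → ℝ) (v : ρ → ℝ) :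
    e * (-2 * (x' ⬝ᵥ (Λ * P) *ᵥ x) + 2 * (v ⬝ᵥ (Nᵀ * P) *ᵥ x)) ≤
      -α * (e * (x ⬝ᵥ P *ᵥ x)) + χ ^ 2 * (v ⬝ᵥ v) -
        e * (2 * (x' ⬝ᵥ (Λ * P) *ᵥ x) - μ * (x ⬝ᵥ (Λ * P) *ᵥ x)) := by
  have hdist := mul_le_mul_of_nonneg_left (two_mul_disturbance_le hC2 hC3 x v) he
  have hvv : 0 ≤ v ⬝ᵥ v := Finset.sum_nonneg fun i _ => mul_self_nonneg (v i)
  have hdrop := mul_le_mul_of_nonneg_right he_le (mul_nonneg (sq_nonneg χ) hvv)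
  rw [← hΛP.eq] at hdist
  linarith

theorem dissipation_inequality_general
    {Λ P Γ A : Matrix ι ι ℝ} {B : Matrix ι κ ℝ} {N : Matrix ι ρ ℝ} {K : Matrix κ ι ℝ}
    {T : Matrix κ κ ℝ} {μ χ α : ℝ} (hΛP : Commute Λ P) (hΛP_symm : (Λ * P).IsSymm) (hμ : 0 ≤ μ)
    (hC1 : (-(fromBlocks (Aᵀ * P * Λ * A - Real.exp (-μ) • (P * Λ)) (Aᵀ * P * Λ * B - Kᵀ * T)
      (Bᵀ * P * Λ * A - T * K) (Bᵀ * P * Λ * B - 2 • T))).PosSemidef)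
    (hC2 : (fromBlocks Γ (P * N) (Nᵀ * P) (χ ^ 2 • (1 : Matrix ρ ρ ℝ))).PosSemidef)
    (hC3 : (-(P * (α • (1 : Matrix ι ι ℝ) - μ • Λ) + Γ)).PosSemidef)
    {X X' : ℝ → ι → ℝ} (hX : ∀ z ∈ Icc (0 : ℝ) 1, HasDerivWithinAt X (X' z) (Icc (0 : ℝ) 1) z)
    (hX' : ContinuousOn X' (Icc (0 : ℝ) 1)) {w : κ → ℝ}
    (hbc : X 0 = A *ᵥ X 1 + B *ᵥ w) (hw : w ⬝ᵥ T *ᵥ (w + K *ᵥ X 1) ≤ 0)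
    {d : ℝ → ρ → ℝ} (hd : ContinuousOn d (Icc (0 : ℝ) 1)) :
    ∫ z in (0 : ℝ)..1, Real.exp (-μ * z) *
        (-2 * (X' z ⬝ᵥ (Λ * P) *ᵥ X z) + 2 * (d z ⬝ᵥ (Nᵀ * P) *ᵥ X z)) ≤
      -α * (∫ z in (0 : ℝ)..1, Real.exp (-μ * z) * (X z ⬝ᵥ P *ᵥ X z)) +
        χ ^ 2 * ∫ z in (0 : ℝ)..1, d z ⬝ᵥ d z := by
  have hcont : ContinuousOn X (Icc 0 1) := fun z hz => (hX z hz).continuousWithinAt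
  have hX'X := continuousOn_dotProduct_mulVec (Λ * P) hX' hcont
  have hXX := continuousOn_dotProduct_mulVec (Λ * P) hcont hcont
  have hdX := continuousOn_dotProduct_mulVec (Nᵀ * P) hd hcont
  have hXPX := continuousOn_dotProduct_mulVec P hcont hcont
  have hdd : ContinuousOn (fun z => d z ⬝ᵥ d z) (Icc 0 1) := by
    simpa only [one_mulVec] using continuousOn_dotProduct_mulVec 1 hd hd
  have hint {f : ℝ → ℝ} (hf : ContinuousOn f (Icc 0 1)) :
      IntervalIntegrable f MeasureTheory.volume 0 1 :=
    hf.intervalIntegrable_of_Icc zero_le_one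
  have hboundary := integral_exp_mul_deriv_quadForm_nonneg (μ := μ) hΛP_symm
    (by simpa only [hΛP.eq, Matrix.mul_assoc] using hC1) hX hX' hbc hw
  have hmono := intervalIntegral.integral_mono_on zero_le_one (hint (by fun_prop))
    (hint (by fun_prop)) fun z hz => dissipation_integrand_le hΛP hC2 hC3
      (Real.exp_pos (-μ * z)).le
      (Real.exp_le_one_iff.2 (mul_nonpos_of_nonpos_of_nonneg (neg_nonpos.2 hμ) hz.1))
      (X z) (X' z) (d z)
  rw [intervalIntegral.integral_sub (hint (by fun_prop)) (hint (by fun_prop)),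
    intervalIntegral.integral_add (hint (by fun_prop)) (hint (by fun_prop)),
    intervalIntegral.integral_const_mul, intervalIntegral.integral_const_mul] at hmono
  linarith

end Dissipation

/-- under the matrix inequalities (C1), (C2), (C3), every `C¹` function
`X : [0,1] → ℝⁿ` satisfying the saturated boundary condition and every continuous
`d : [0,1] → ℝ^q` satisfy the dissipation inequality
`∫₀¹ e^{-μz}(-2X′ᵀΛPX + 2dᵀNᵀPX) dz ≤ -α∫₀¹ e^{-μz} XᵀPX dz + χ²∫₀¹ |d|² dz`. -/
theorem dissipation_inequality {n m q : ℕ}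
    (Λ : Matrix (Fin n) (Fin n) ℝ) (hΛdiag : Λ.IsDiag) (hΛpos : ∀ i, 0 < Λ i i)
    (H : Matrix (Fin n) (Fin n) ℝ) (B : Matrix (Fin n) (Fin m) ℝ)
    (N : Matrix (Fin n) (Fin q) ℝ) (K : Matrix (Fin m) (Fin n) ℝ)
    (ubar : Fin m → ℝ) (hubar : ∀ i, 0 < ubar i)
    (P : Matrix (Fin n) (Fin n) ℝ) (hPdiag : P.IsDiag) (hPpos : ∀ i, 0 < P i i)
    (T : Matrix (Fin m) (Fin m) ℝ) (hTdiag : T.IsDiag) (hTpos : ∀ i, 0 < T i i)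
    (μ χ α : ℝ) (hμ : 0 < μ) (hχ : 0 < χ) (hα : 0 < α)
    (Γ : Matrix (Fin n) (Fin n) ℝ) (hΓsymm : Γ.IsSymm) (hΓpos : Γ.PosDef)
    (hC1 : (-(Matrix.fromBlocks
        ((H + B * K)ᵀ * P * Λ * (H + B * K) - Real.exp (-μ) • (P * Λ))
        ((H + B * K)ᵀ * P * Λ * B - Kᵀ * T)
        (Bᵀ * P * Λ * (H + B * K) - T * K)
        (Bᵀ * P * Λ * B - 2 • T))).PosSemidef)
    (hC2 : (Matrix.fromBlocks Γ (P * N) (Nᵀ * P)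
        (χ ^ 2 • (1 : Matrix (Fin q) (Fin q) ℝ))).PosSemidef)
    (hC3 : (-(P * (α • (1 : Matrix (Fin n) (Fin n) ℝ) - μ • Λ) + Γ)).PosSemidef)
    (X X' : ℝ → Fin n → ℝ)
    (hX : ∀ z ∈ Icc (0:ℝ) 1, HasDerivWithinAt X (X' z) (Icc (0:ℝ) 1) z)
    (hX' : ContinuousOn X' (Icc (0:ℝ) 1))
    (hbc : X 0 = (H + B * K).mulVec (X 1) + B.mulVec (deadzone ubar (K.mulVec (X 1))))
    (d : ℝ → Fin q → ℝ) (hd : ContinuousOn d (Icc (0:ℝ) 1)) :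
    ∫ z in (0:ℝ)..1, Real.exp (-μ * z) *
        (-2 * (X' z ⬝ᵥ (Λ * P).mulVec (X z)) + 2 * (d z ⬝ᵥ (Nᵀ * P).mulVec (X z))) ≤
      -α * (∫ z in (0:ℝ)..1, Real.exp (-μ * z) * (X z ⬝ᵥ P.mulVec (X z))) +
        χ ^ 2 * ∫ z in (0:ℝ)..1, enorm' (d z) ^ 2 := by
  simpa only [enorm'_sq] using dissipation_inequality_general (commute_of_isDiag hΛdiag hPdiag)
    (isDiag_mul hΛdiag hPdiag).isSymm hμ.le hC1 hC2 hC3 hX hX' hbc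
    (deadzone_dotProduct_mulVec_nonpos hTdiag (fun i => (hTpos i).le) (fun i => (hubar i).le) _) hd
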